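/- For every real p > 4 there exists a constant C_p > 0 such that for all 0 ≤ s ≤ t and every x ∈ [0,1], ( ∫₀^s ( ∫₀¹ (G_{t−r}(x,z) − G_{s−r}(x,z))² dz )^{p/(p−2)} dr )^{(p−2)/2} ≤ C_p |t−s|^{(p−4)/4}. -/

import Mathlib

/-! Write `a = s - r > 0`, `h = t - s ≥ 0` and `q = p / (p - 2) ∈ (1, 2)`. By Parseval for the
sine system (`integral_sq_sine_series`), the inner integral is
`∑ 2 e^{-2π²n²a} (1 - e^{-π²n²h})² sin²(nπx)`. Since `(1 - e^{-u})² ≤ min 1 u` and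
`y e^{-y} ≤ 1`, each term is at most `2 min(1, h/a) e^{-π²n²a}`, and comparing the remaining
series with a Gaussian integral bounds the inner integral by `min(1, h/a) a^{-1/2}`
(`inner_integral_le`). The `q`-th power of this bound is integrated over `a ∈ (0, ∞)` by
splitting at `a = h`: `∫₀^h a^{-q/2} da` converges because `q < 2`, and
`h^q ∫_h^∞ a^{-3q/2} da` converges because `q > 1`; both are multiples of `h^{1 - q/2}`.
Finally `(1 - q/2) (p - 2)/2 = (p - 4)/4`. -/

open Real MeasureTheory Set

/-- The Dirichlet heat kernel on `[0,1]`: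
`G t x y = ∑_{n=1}^∞ 2 e^{−π²n²t} sin(nπx) sin(nπy)` for `t > 0`, and `0` for `t ≤ 0`. -/
noncomputable def G (t x y : ℝ) : ℝ :=
  if 0 < t then
    ∑' n : ℕ, 2 * Real.exp (-(Real.pi ^ 2) * ((n : ℝ) + 1) ^ 2 * t)
      * Real.sin (((n : ℝ) + 1) * Real.pi * x) * Real.sin (((n : ℝ) + 1) * Real.pi * y)
  else 0


lemma integral_cos_int_mul_pi (k : ℤ) (hk : k ≠ 0) :
    ∫ z in (0 : ℝ)..1, Real.cos (k * π * z) = 0 := by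
  have hk' : (k : ℝ) * π ≠ 0 := mul_ne_zero (by exact_mod_cast hk) pi_ne_zero
  rw [intervalIntegral.integral_comp_mul_left (fun z => Real.cos z) hk']
  simp [integral_cos, Real.sin_int_mul_pi]

lemma integral_sin_mul_sin (m n : ℕ) :
    ∫ z in (0 : ℝ)..1, Real.sin (((m : ℝ) + 1) * π * z) * Real.sin (((n : ℝ) + 1) * π * z)
      = if m = n then 1 / 2 else 0 := by
  have key : ∀ z : ℝ, Real.sin (((m : ℝ) + 1) * π * z) * Real.sin (((n : ℝ) + 1) * π * z)
      = 1 / 2 * Real.cos (((m - n : ℤ) : ℝ) * π * z)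
        - 1 / 2 * Real.cos (((m + n + 2 : ℤ) : ℝ) * π * z) := by
    intro z
    have e1 : (((m - n : ℤ) : ℝ) * π * z) = ((m : ℝ) + 1) * π * z - ((n : ℝ) + 1) * π * z := by
      push_cast; ring
    have e2 : (((m + n + 2 : ℤ) : ℝ) * π * z)
        = ((m : ℝ) + 1) * π * z + ((n : ℝ) + 1) * π * z := by
      push_cast; ring
    rw [e1, e2, Real.cos_add, Real.cos_sub]
    ring
  simp_rw [key]
  rw [intervalIntegral.integral_sub
      (Continuous.intervalIntegrable (by fun_prop) _ _)
      (Continuous.intervalIntegrable (by fun_prop) _ _),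
    intervalIntegral.integral_const_mul, intervalIntegral.integral_const_mul,
    integral_cos_int_mul_pi (m + n + 2) (by omega)]
  split_ifs with h
  · subst h; simp
  · rw [integral_cos_int_mul_pi (m - n) (by omega)]; simp

/-- Parseval's identity for an absolutely convergent sine series on `[0,1]`. -/
lemma integral_sq_sine_series (c : ℕ → ℝ) (hc : Summable fun n => |c n|) :
    ∫ z in Set.Icc (0 : ℝ) 1, (∑' n : ℕ, c n * Real.sin (((n : ℝ) + 1) * π * z)) ^ 2
      = ∑' n, c n ^ 2 / 2 := by
  set f : ℝ → ℝ := fun z => ∑' n : ℕ, c n * Real.sin (((n : ℝ) + 1) * π * z) with hf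
  have hbound : ∀ n z, ‖c n * Real.sin (((n : ℝ) + 1) * π * z)‖ ≤ |c n| := by
    intro n z
    rw [norm_mul, Real.norm_eq_abs, Real.norm_eq_abs]
    exact mul_le_of_le_one_right (abs_nonneg _) (Real.abs_sin_le_one _)
  have hsum : ∀ z, HasSum (fun n => c n * Real.sin (((n : ℝ) + 1) * π * z)) (f z) := fun z =>
    (Summable.of_norm_bounded hc fun n => hbound n z).hasSum
  have hfc : Continuous f := continuous_tsum (fun n => by fun_prop) hc hbound
  -- Integration of the series against a bounded continuous weight, term by term.
  have hint : ∀ (g : ℝ → ℝ) (M : ℝ), Continuous g → (∀ z, |g z| ≤ M) →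
      HasSum (fun n => ∫ z in (0 : ℝ)..1, c n * Real.sin (((n : ℝ) + 1) * π * z) * g z)
        (∫ z in (0 : ℝ)..1, f z * g z) := by
    intro g M hg hM
    apply intervalIntegral.hasSum_integral_of_dominated_convergence (fun n _ => |c n| * M)
    · intro n
      exact Continuous.aestronglyMeasurable (by fun_prop)
    · intro n
      refine ae_of_all _ fun z _ => ?_
      rw [norm_mul]
      exact mul_le_mul (hbound n z) (hM z) (norm_nonneg _) (abs_nonneg _)
    · exact ae_of_all _ fun z _ => hc.mul_right M
    · exact intervalIntegrable_const
    · exact ae_of_all _ fun z _ => (hsum z).mul_right _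
  have hfM : ∀ z, |f z| ≤ ∑' n, |c n| := fun z =>
    tsum_of_norm_bounded hc.hasSum fun n => hbound n z
  have hcoef : ∀ m : ℕ, ∫ z in (0 : ℝ)..1, f z * Real.sin (((m : ℝ) + 1) * π * z) = c m / 2 := by
    intro m
    have h1 := hint (fun z => Real.sin (((m : ℝ) + 1) * π * z)) 1 (by fun_prop)
      (fun z => Real.abs_sin_le_one _)
    have h2 : ∀ n : ℕ, ∫ z in (0 : ℝ)..1,
        c n * Real.sin (((n : ℝ) + 1) * π * z) * Real.sin (((m : ℝ) + 1) * π * z)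
        = if n = m then c m / 2 else 0 := by
      intro n
      simp_rw [mul_assoc (c n)]
      rw [intervalIntegral.integral_const_mul, integral_sin_mul_sin]
      split_ifs with h
      · subst h; ring
      · simp
    simp_rw [h2] at h1
    exact h1.unique (hasSum_ite_eq m (c m / 2))
  have h3 := hint f _ hfc hfM
  have h4 : ∀ n : ℕ, ∫ z in (0 : ℝ)..1, c n * Real.sin (((n : ℝ) + 1) * π * z) * f z
      = c n ^ 2 / 2 := by
    intro n
    have : ∀ z, c n * Real.sin (((n : ℝ) + 1) * π * z) * f z
        = c n * (f z * Real.sin (((n : ℝ) + 1) * π * z)) := fun z => by ring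
    simp_rw [this]
    rw [intervalIntegral.integral_const_mul, hcoef]
    ring
  simp_rw [h4] at h3
  rw [h3.tsum_eq, integral_Icc_eq_integral_Ioc,
    ← intervalIntegral.integral_of_le zero_le_one]
  simp_rw [sq, hf]

lemma sum_range_gaussian_le (b : ℝ) (hb : 0 < b) (N : ℕ) :
    ∑ n ∈ Finset.range N, Real.exp (-b * ((n : ℝ) + 1) ^ 2) ≤ √(π / b) / 2 := by
  have hanti : AntitoneOn (fun x : ℝ => Real.exp (-b * x ^ 2)) (Icc 0 (0 + (N : ℝ))) := by
    intro x hx y hy hxy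
    have : x ^ 2 ≤ y ^ 2 := pow_le_pow_left₀ hx.1 hxy 2
    exact Real.exp_le_exp.2 (by nlinarith)
  have h := hanti.sum_le_integral
  simp only [zero_add, Nat.cast_add, Nat.cast_one] at h
  refine h.trans ?_
  rw [← integral_gaussian_Ioi, intervalIntegral.integral_of_le (Nat.cast_nonneg N)]
  exact setIntegral_mono_set (integrable_exp_neg_mul_sq hb).integrableOn
    (ae_of_all _ fun x => (Real.exp_pos _).le) (Ioc_subset_Ioi_self.eventuallyLE)

lemma summable_heat (a : ℝ) (ha : 0 < a) :
    Summable fun n : ℕ => Real.exp (-(π ^ 2) * ((n : ℝ) + 1) ^ 2 * a) := by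
  have hb : 0 < π ^ 2 * a := by positivity
  refine (summable_of_sum_range_le (fun n => (Real.exp_pos _).le)
    (sum_range_gaussian_le _ hb)).congr fun n => ?_
  congr 1; ring

lemma tsum_heat_le (a : ℝ) (ha : 0 < a) :
    2 * ∑' n : ℕ, Real.exp (-(π ^ 2) * ((n : ℝ) + 1) ^ 2 * a) ≤ a ^ (-(1 / 2) : ℝ) := by
  have hb : 0 < π ^ 2 * a := by positivity
  have h := Real.tsum_le_of_sum_range_le
    (fun n : ℕ => (Real.exp_pos (-(π ^ 2 * a) * ((n : ℝ) + 1) ^ 2)).le)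
    (sum_range_gaussian_le _ hb)
  have e : ∀ n : ℕ, -(π ^ 2) * ((n : ℝ) + 1) ^ 2 * a = -(π ^ 2 * a) * ((n : ℝ) + 1) ^ 2 :=
    fun n => by ring
  simp_rw [e]
  have h2 : √(π / (π ^ 2 * a)) ≤ a ^ (-(1 / 2) : ℝ) := by
    rw [Real.rpow_neg ha.le, ← Real.sqrt_eq_rpow, ← Real.sqrt_inv]
    apply Real.sqrt_le_sqrt
    rw [div_le_iff₀ hb]
    have : a⁻¹ * (π ^ 2 * a) = π ^ 2 := by field_simp
    rw [this]
    nlinarith [pi_gt_three]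
  linarith

/-- The termwise estimate: with `E = e^{-y}`, `y = l a` and `u = l h`, one has
`E² (1 - e^{-u})² ≤ min(1, h/a) E`, from `(1 - e^{-u})² ≤ min 1 u` and `y e^{-y} ≤ 1`. -/
lemma exp_sub_exp_sq_le (l a h : ℝ) (hl : 0 ≤ l) (ha : 0 < a) (hh : 0 ≤ h) :
    (Real.exp (-l * (a + h)) - Real.exp (-l * a)) ^ 2 ≤ min 1 (h / a) * Real.exp (-l * a) := by
  set E := Real.exp (-l * a) with hE
  set D := 1 - Real.exp (-(l * h)) with hD
  have hE0 : 0 < E := Real.exp_pos _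
  have hE1 : E ≤ 1 := Real.exp_le_one_iff.2 (by nlinarith)
  have hlh : 0 ≤ l * h := mul_nonneg hl hh
  have hD0 : 0 ≤ D := sub_nonneg.2 (Real.exp_le_one_iff.2 (by linarith))
  have hD1 : D ≤ 1 := by have := Real.exp_pos (-(l * h)); linarith
  have hDu : D ≤ l * h := by have := Real.add_one_le_exp (-(l * h)); linarith
  have hyE : l * a * E ≤ 1 := by
    have h1 := Real.add_one_le_exp (l * a)
    have h2 : Real.exp (l * a) * E = 1 := by rw [hE, ← Real.exp_add]; simp
    nlinarith
  have hDsq : D ^ 2 ≤ D := by nlinarith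
  have e : (Real.exp (-l * (a + h)) - E) ^ 2 = E * D ^ 2 * E := by
    have : Real.exp (-l * (a + h)) = E * Real.exp (-(l * h)) := by
      rw [hE, ← Real.exp_add]; congr 1; ring
    rw [this, hD]; ring
  rw [e]
  refine mul_le_mul_of_nonneg_right (le_min ?_ ?_) hE0.le
  · exact mul_le_one₀ hE1 (sq_nonneg _) (by nlinarith)
  · rw [le_div_iff₀ ha]
    calc E * D ^ 2 * a ≤ E * (l * h) * a := by gcongr; exact hDsq.trans hDu
      _ = (l * a * E) * h := by ring
      _ ≤ 1 * h := by gcongr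
      _ = h := one_mul h

lemma inner_integral_le (a h x : ℝ) (ha : 0 < a) (hh : 0 ≤ h) :
    ∫ z in Set.Icc (0 : ℝ) 1, (G (a + h) x z - G a x z) ^ 2
      ≤ min 1 (h / a) * a ^ (-(1 / 2) : ℝ) := by
  have hah : 0 < a + h := by linarith
  set e : ℝ → ℕ → ℝ := fun b n => Real.exp (-(π ^ 2) * ((n : ℝ) + 1) ^ 2 * b) with he
  set S : ℝ → ℕ → ℝ := fun z n => Real.sin (((n : ℝ) + 1) * π * z) with hS
  have hterm : ∀ b, 0 < b → Summable fun n => 2 * e b n * S x n := fun b hb => by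
    refine Summable.of_norm_bounded ((summable_heat b hb).mul_left 2) fun n => ?_
    rw [norm_mul, Real.norm_of_nonneg (by positivity : 0 ≤ 2 * e b n)]
    exact mul_le_of_le_one_right (by positivity) (Real.abs_sin_le_one _)
  have hterm2 : ∀ b, 0 < b → ∀ z, Summable fun n => 2 * e b n * S x n * S z n :=
    fun b hb z => by
      refine Summable.of_norm_bounded (hterm b hb).norm fun n => ?_
      rw [norm_mul]
      exact mul_le_of_le_one_right (norm_nonneg _) (Real.abs_sin_le_one _)
  set c : ℕ → ℝ := fun n => 2 * e (a + h) n * S x n - 2 * e a n * S x n with hc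
  have hcs : Summable fun n => |c n| := ((hterm _ hah).sub (hterm _ ha)).norm
  have hG : ∀ z, G (a + h) x z - G a x z = ∑' n, c n * S z n := by
    intro z
    simp only [G, if_pos ha, if_pos hah]
    rw [← (hterm2 _ hah z).tsum_sub (hterm2 _ ha z)]
    exact tsum_congr fun n => by simp only [hc]; ring
  simp_rw [hG]
  rw [integral_sq_sine_series c hcs]
  have hle : ∀ n, c n ^ 2 / 2 ≤ min 1 (h / a) * (2 * e a n) := by
    intro n
    have h1 := exp_sub_exp_sq_le (π ^ 2 * ((n : ℝ) + 1) ^ 2) a h (by positivity) ha hh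
    have h2 : S x n ^ 2 ≤ 1 := Real.sin_sq_le_one _
    have h3 : c n ^ 2 / 2 = 2 * ((e (a + h) n - e a n) ^ 2 * S x n ^ 2) := by
      simp only [hc]; ring
    rw [← neg_mul] at h1
    have h4 : (e (a + h) n - e a n) ^ 2 * S x n ^ 2 ≤ (e (a + h) n - e a n) ^ 2 :=
      mul_le_of_le_one_right (sq_nonneg _) h2
    have h5 : (e (a + h) n - e a n) ^ 2 ≤ min 1 (h / a) * e a n := h1
    rw [h3]; linarith
  have hsr : Summable fun n => min 1 (h / a) * (2 * e a n) :=
    ((summable_heat a ha).mul_left 2).mul_left _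
  have hsl : Summable fun n => c n ^ 2 / 2 :=
    Summable.of_nonneg_of_le (fun n => by positivity) hle hsr
  refine (hsl.tsum_le_tsum hle hsr).trans ?_
  rw [tsum_mul_left, tsum_mul_left]
  exact mul_le_mul_of_nonneg_left (tsum_heat_le a ha)
    (le_min zero_le_one (div_nonneg hh ha.le))

/-- The majorant in `a` of the `q`-th power of the inner integral, split at `a = h`. -/
noncomputable def majorant (q h a : ℝ) : ℝ :=
  (Ioc 0 h).indicator (fun a => a ^ (-(q / 2))) a
    + (Ioi h).indicator (fun a => h ^ q * a ^ (-(3 * q / 2))) a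

lemma integrable_majorant_parts (q h : ℝ) (hq1 : 1 < q) (hq2 : q < 2) (hh : 0 < h) :
    Integrable ((Ioc 0 h).indicator (fun a : ℝ => a ^ (-(q / 2)))) ∧
    Integrable ((Ioi h).indicator (fun a : ℝ => h ^ q * a ^ (-(3 * q / 2)))) := by
  constructor
  · rw [integrable_indicator_iff measurableSet_Ioc,
      ← intervalIntegrable_iff_integrableOn_Ioc_of_le hh.le]
    exact intervalIntegral.intervalIntegrable_rpow' (by linarith)
  · rw [integrable_indicator_iff measurableSet_Ioi]
    exact (integrableOn_Ioi_rpow_of_lt (by linarith) hh).const_mul _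

lemma integrable_majorant (q h : ℝ) (hq1 : 1 < q) (hq2 : q < 2) (hh : 0 < h) :
    Integrable (majorant q h) :=
  (integrable_majorant_parts q h hq1 hq2 hh).1.add (integrable_majorant_parts q h hq1 hq2 hh).2

lemma integral_majorant (q h : ℝ) (hq1 : 1 < q) (hq2 : q < 2) (hh : 0 < h) :
    ∫ a, majorant q h a = (1 / (1 - q / 2) + 1 / (3 * q / 2 - 1)) * h ^ (1 - q / 2) := by
  obtain ⟨h1, h2⟩ := integrable_majorant_parts q h hq1 hq2 hh
  unfold majorant
  rw [integral_add h1 h2, integral_indicator measurableSet_Ioc,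
    integral_indicator measurableSet_Ioi,
    ← intervalIntegral.integral_of_le hh.le, integral_rpow (Or.inl (by linarith)),
    integral_const_mul, integral_Ioi_rpow_of_lt (by linarith) hh,
    Real.zero_rpow (by linarith)]
  have e1 : h ^ q * h ^ (-(3 * q / 2) + 1) = h ^ (1 - q / 2) := by
    rw [← Real.rpow_add hh]; congr 1; ring
  have e2 : -(q / 2) + 1 = 1 - q / 2 := by ring
  rw [e2]
  have e3 : -(3 * q / 2) + 1 = -(3 * q / 2 - 1) := by ring
  have e4 : h ^ q * (-h ^ (-(3 * q / 2) + 1) / (-(3 * q / 2) + 1))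
      = h ^ (1 - q / 2) / (3 * q / 2 - 1) := by
    rw [← e1, e3, neg_div_neg_eq, ← mul_div_assoc]
  rw [e4, sub_zero]
  ring

lemma majorant_nonneg (q h a : ℝ) (hh : 0 < h) : 0 ≤ majorant q h a := by
  refine add_nonneg (indicator_nonneg (fun b hb => ?_) _) (indicator_nonneg (fun b hb => ?_) _)
  · exact Real.rpow_nonneg hb.1.le _
  · exact mul_nonneg (Real.rpow_nonneg hh.le _) (Real.rpow_nonneg (hh.trans hb).le _)

lemma le_majorant (q h a : ℝ) (hq : 0 ≤ q) (ha : 0 < a) (hh : 0 < h) :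
    (min 1 (h / a) * a ^ (-(1 / 2) : ℝ)) ^ q ≤ majorant q h a := by
  have hpos : 0 ≤ a ^ (-(1 / 2) : ℝ) := Real.rpow_nonneg ha.le _
  have hmin : 0 ≤ min 1 (h / a) := le_min zero_le_one (by positivity)
  have e1 : (a ^ (-(1 / 2) : ℝ)) ^ q = a ^ (-(q / 2)) := by
    rw [← Real.rpow_mul ha.le]; congr 1; ring
  rw [Real.mul_rpow hmin hpos, e1]
  unfold majorant
  rcases le_or_gt a h with hah | hah
  · rw [indicator_of_mem (show a ∈ Ioc 0 h from ⟨ha, hah⟩),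
      indicator_of_notMem (show a ∉ Ioi h from not_lt.2 hah), add_zero]
    exact mul_le_of_le_one_left (Real.rpow_nonneg ha.le _)
      (Real.rpow_le_one hmin (min_le_left _ _) hq)
  · rw [indicator_of_notMem (show a ∉ Ioc 0 h from fun hm => absurd hm.2 (not_le.2 hah)),
      indicator_of_mem (show a ∈ Ioi h from hah), zero_add]
    have e2 : h ^ q * a ^ (-(3 * q / 2)) = (h / a) ^ q * a ^ (-(q / 2)) := by
      rw [Real.div_rpow hh.le ha.le, div_eq_mul_inv (h ^ q), ← Real.rpow_neg ha.le, mul_assoc,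
        ← Real.rpow_add ha]
      congr 2; ring
    rw [e2]
    exact mul_le_mul_of_nonneg_right (Real.rpow_le_rpow hmin (min_le_right _ _) hq)
      (Real.rpow_nonneg ha.le _)

/-- The time integral is at most a constant multiple of `h^{1 - q/2}`, uniformly in `s` and `x`. -/
lemma outer_integral_le (q h s x : ℝ) (hq1 : 1 < q) (hq2 : q < 2) (hh : 0 < h) :
    ∫ r in Set.Icc (0 : ℝ) s,
        (∫ z in Set.Icc (0 : ℝ) 1, (G (s + h - r) x z - G (s - r) x z) ^ 2) ^ q
      ≤ (1 / (1 - q / 2) + 1 / (3 * q / 2 - 1)) * h ^ (1 - q / 2) := by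
  have hnn : ∀ r, 0 ≤ ∫ z in Set.Icc (0 : ℝ) 1, (G (s + h - r) x z - G (s - r) x z) ^ 2 :=
    fun r => integral_nonneg fun z => sq_nonneg _
  have hi : Integrable fun r => majorant q h (s - r) :=
    (integrable_majorant q h hq1 hq2 hh).comp_sub_left s
  rw [← integral_majorant q h hq1 hq2 hh, ← integral_sub_left_eq_self (majorant q h) volume s]
  refine le_trans ?_ (setIntegral_le_integral (s := Ico 0 s) hi
    (ae_of_all _ fun r => majorant_nonneg q h _ hh))
  -- The endpoint `r = s`, where `G 0 = 0` by convention, is a null set.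
  rw [integral_Icc_eq_integral_Ico]
  refine integral_mono_of_nonneg (ae_of_all _ fun r => Real.rpow_nonneg (hnn r) _)
    hi.integrableOn ?_
  refine (ae_restrict_iff' measurableSet_Ico).2 (ae_of_all _ fun r hr => ?_)
  have ha : 0 < s - r := sub_pos.2 hr.2
  have h1 := inner_integral_le (s - r) h x ha hh.le
  rw [show s - r + h = s + h - r by ring] at h1
  exact (Real.rpow_le_rpow (hnn r) h1 (by linarith)).trans
    (le_majorant q h (s - r) (by linarith) ha hh)

/-- For every `p > 4` there is `C_p > 0` such that for all `0 ≤ s ≤ t` and `x ∈ [0,1]`,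
`(∫₀^s (∫₀¹ (G_{t−r}(x,z) − G_{s−r}(x,z))² dz)^{p/(p−2)} dr)^{(p−2)/2} ≤ C_p |t−s|^{(p−4)/4}`. -/
theorem kernel_Lp_time_modulus (p : ℝ) (hp : 4 < p) :
    ∃ C : ℝ, 0 < C ∧ ∀ s t x : ℝ, 0 ≤ s → s ≤ t → x ∈ Set.Icc (0 : ℝ) 1 →
      (∫ r in Set.Icc (0 : ℝ) s,
          (∫ z in Set.Icc (0 : ℝ) 1, (G (t - r) x z - G (s - r) x z) ^ 2) ^ (p / (p - 2)))
            ^ ((p - 2) / 2)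
        ≤ C * |t - s| ^ ((p - 4) / 4) := by
  have hp2 : 0 < p - 2 := by linarith
  set q := p / (p - 2) with hq
  have hq1 : 1 < q := by rw [hq, lt_div_iff₀ hp2]; linarith
  have hq2 : q < 2 := by rw [hq, div_lt_iff₀ hp2]; linarith
  set K := 1 / (1 - q / 2) + 1 / (3 * q / 2 - 1) with hK
  have hK0 : 0 < K := by
    have h1 : 0 < 1 - q / 2 := by linarith
    have h2 : 0 < 3 * q / 2 - 1 := by linarith
    positivity
  refine ⟨K ^ ((p - 2) / 2), Real.rpow_pos_of_pos hK0 _, fun s t x hs hst hx => ?_⟩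
  rcases hst.eq_or_lt with rfl | hlt
  · simp [Real.zero_rpow (show q ≠ 0 by linarith),
      Real.zero_rpow (show (p - 2) / 2 ≠ 0 by linarith),
      Real.zero_rpow (show (p - 4) / 4 ≠ 0 by linarith)]
  · have hh : 0 < t - s := sub_pos.2 hlt
    have h1 := outer_integral_le q (t - s) s x hq1 hq2 hh
    rw [show s + (t - s) = t by ring] at h1
    refine (Real.rpow_le_rpow (integral_nonneg fun r =>
      Real.rpow_nonneg (integral_nonneg fun z => sq_nonneg _) _) h1 (by linarith)).trans ?_
    rw [Real.mul_rpow hK0.le (Real.rpow_nonneg hh.le _), ← Real.rpow_mul hh.le, abs_of_pos hh,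
      show (1 - q / 2) * ((p - 2) / 2) = (p - 4) / 4 by rw [hq]; field_simp; ring]
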